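/- arXiv:2512.10928 — 2 statements merged into one kernel-verified Lean document; each statement's English description precedes it below -/
import Mathlib

section
/- Let n ≥ 3, let a, b, c ∈ ℂ with a ≠ 0, and let d_{0jk} (for j + k = n − 2), e_{ijk} and f_{ijk} (for i + j + k = n − 2, all indices ≥ 0) be complex numbers. Then the following system holds — for all i, j, k ≥ 0 with i + j + k = n: e_{i−1,j,k−1}·(ia + jb + kc) = 0 when i > 0 and k > 0; f_{i−1,j−1,k}·(ia + jb + kc) = 0 when i > 0 and j > 0; d_{0,j−1,k−1}·(jb + kc) = 0 when i = 0, j > 0 and k > 0 — if and only if either all the numbers d_{0jk}, e_{ijk}, f_{ijk} are zero, or there exists a subset H of T' which is either a singleton or a maximal segment of T' containing no two points collinear (in ℤ³) with (n,0,0), such that: ia + jb + kc = 0 for every (i,j,k) ∈ H; d_{0,j,k} = 0 whenever (0, j+1, k+1) ∉ H; e_{i,j,k} = 0 whenever (i+1, j, k+1) ∉ H; and f_{i,j,k} = 0 whenever (i+1, j+1, k) ∉ H. -/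
/-!
Both directions turn on the zero set `H₀` of the linear form `L(i,j,k) = ia + jb + kc` in `T'`.
The system says exactly that every unknown attached to a point of `T'` outside `H₀` vanishes, so
one direction is immediate for any admissible `H`, which is contained in `H₀`.

For the other direction `H = H₀` works as soon as `H₀` is nonempty. Suppose it has at least two
points. Since `L(n,0,0) = na ≠ 0`, the form `L` does not vanish identically on the plane
`i + j + k = n`, so its rational zeros there are collinear (`exists_param_of_zeros`). Conversely,
`L` vanishes on the whole line through two zeros (`form_eq_zero_of_collinear`), which gives
maximality, and also shows that no such line passes through `(n,0,0)`.
-/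

open scoped BigOperators

/-- Embedding of an integer point of `ℕ³` into `ℚ³`. -/
def emb (p : ℕ × ℕ × ℕ) : Fin 3 → ℚ := ![(p.1 : ℚ), (p.2.1 : ℚ), (p.2.2 : ℚ)]

/-- The triangle grid of size `n` with the three vertices removed. -/
def Tprime (n : ℕ) : Set (ℕ × ℕ × ℕ) :=
  {p | p.1 + p.2.1 + p.2.2 = n} \ {(n, 0, 0), (0, n, 0), (0, 0, n)}

/-- `H` is a maximal segment of `T'`: it has at least two points, all its points
are collinear, and it contains every point of `T'` on the line through two of its
points. -/
def IsMaxSegment (n : ℕ) (H : Set (ℕ × ℕ × ℕ)) : Prop :=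
  H ⊆ Tprime n ∧ (∃ P ∈ H, ∃ Q ∈ H, P ≠ Q) ∧ Collinear ℚ (emb '' H) ∧
    ∀ R ∈ Tprime n,
      (∃ P ∈ H, ∃ Q ∈ H, P ≠ Q ∧ Collinear ℚ {emb P, emb Q, emb R}) → R ∈ H

/-- The value at `p` of the linear form with coefficients `a`, `b`, `c`. -/
def linForm (a b c : ℂ) (p : ℕ × ℕ × ℕ) : ℂ :=
  (p.1 : ℂ) * a + (p.2.1 : ℂ) * b + (p.2.2 : ℂ) * c

lemma emb_injective : Function.Injective emb := by
  rintro ⟨i, j, k⟩ ⟨i', j', k'⟩ h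
  have h0 := congrFun h 0
  have h1 := congrFun h 1
  have h2 := congrFun h 2
  simp [emb] at h0 h1 h2
  simp [h0, h1, h2]

lemma exists_param_of_collinear {P Q R : ℕ × ℕ × ℕ} (hPQ : P ≠ Q)
    (h : Collinear ℚ {emb P, emb Q, emb R}) :
    ∃ t : ℚ, emb R = t • (emb Q - emb P) + emb P := by
  rw [collinear_iff_of_mem (p₀ := emb P) (by simp)] at h
  obtain ⟨v, hv⟩ := h
  obtain ⟨s, hs⟩ := hv (emb Q) (by simp)
  obtain ⟨r, hr⟩ := hv (emb R) (by simp)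
  rw [vadd_eq_add] at hs hr
  have hs0 : s ≠ 0 := by
    rintro rfl
    exact hPQ (emb_injective (by simpa using hs.symm))
  refine ⟨r / s, ?_⟩
  rw [hr, hs, add_sub_cancel_right, smul_smul, div_mul_cancel₀ _ hs0]

/-- A linear form vanishing at two distinct points vanishes on the line through them. -/
lemma form_eq_zero_of_collinear {a b c : ℂ} {P Q R : ℕ × ℕ × ℕ} (hPQ : P ≠ Q)
    (h : Collinear ℚ {emb P, emb Q, emb R})
    (hP : linForm a b c P = 0) (hQ : linForm a b c Q = 0) : linForm a b c R = 0 := by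
  obtain ⟨t, ht⟩ := exists_param_of_collinear hPQ h
  have h0 := congrArg (fun q : ℚ => (q : ℂ)) (congrFun ht 0)
  have h1 := congrArg (fun q : ℚ => (q : ℂ)) (congrFun ht 1)
  have h2 := congrArg (fun q : ℚ => (q : ℂ)) (congrFun ht 2)
  simp [emb] at h0 h1 h2
  unfold linForm at *
  linear_combination a * h0 + b * h1 + c * h2 + t * hQ + (1 - t) * hP

/-- Any zero of the form in the plane `i + j + k = n` lies on the line through two given ones.
Eliminating `i`, the differences `Q - P` and `R - P` are both annihilated by the vector
`(b - a, c - a)`, which is nonzero because `na ≠ 0`; hence their determinant vanishes. -/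
lemma exists_param_of_zeros {n : ℕ} (hn : n ≠ 0) {a b c : ℂ} (ha : a ≠ 0) {P Q R : ℕ × ℕ × ℕ}
    (hPQ : P ≠ Q) (sP : P.1 + P.2.1 + P.2.2 = n) (sQ : Q.1 + Q.2.1 + Q.2.2 = n)
    (sR : R.1 + R.2.1 + R.2.2 = n) (hP : linForm a b c P = 0) (hQ : linForm a b c Q = 0)
    (hR : linForm a b c R = 0) : ∃ t : ℚ, emb R = t • (emb Q - emb P) + emb P := by
  obtain ⟨p0, p1, p2⟩ := P
  obtain ⟨q0, q1, q2⟩ := Q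
  obtain ⟨r0, r1, r2⟩ := R
  simp only [linForm] at *
  have cP : (p0 : ℂ) + p1 + p2 = n := by exact_mod_cast sP
  have cQ : (q0 : ℂ) + q1 + q2 = n := by exact_mod_cast sQ
  have cR : (r0 : ℂ) + r1 + r2 = n := by exact_mod_cast sR
  have eU : ((q1 : ℂ) - p1) * (b - a) + ((q2 : ℂ) - p2) * (c - a) = 0 := by
    linear_combination hQ - hP - a * cQ + a * cP
  have eV : ((r1 : ℂ) - p1) * (b - a) + ((r2 : ℂ) - p2) * (c - a) = 0 := by
    linear_combination hR - hP - a * cR + a * cP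
  have hdet : ((q1 : ℂ) - p1) * (r2 - p2) - ((q2 : ℂ) - p2) * (r1 - p1) = 0 := by
    by_contra hD
    have hb : b - a = 0 := by
      refine (mul_eq_zero.mp ?_).resolve_left hD
      linear_combination ((r2 : ℂ) - p2) * eU - ((q2 : ℂ) - p2) * eV
    have hc : c - a = 0 := by
      refine (mul_eq_zero.mp ?_).resolve_left hD
      linear_combination ((q1 : ℂ) - p1) * eV - ((r1 : ℂ) - p1) * eU
    have hna : (n : ℂ) * a = 0 := by
      linear_combination hP - a * cP - (p1 : ℂ) * hb - (p2 : ℂ) * hc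
    exact (mul_ne_zero (Nat.cast_ne_zero.mpr hn) ha) hna
  have hdetQ : ((q1 : ℚ) - p1) * (r2 - p2) - ((q2 : ℚ) - p2) * (r1 - p1) = 0 := by
    exact_mod_cast hdet
  have dP : (p0 : ℚ) + p1 + p2 = n := by exact_mod_cast sP
  have dQ : (q0 : ℚ) + q1 + q2 = n := by exact_mod_cast sQ
  have dR : (r0 : ℚ) + r1 + r2 = n := by exact_mod_cast sR
  -- Two of the three coordinate equations suffice, by the sum condition.
  have key : ∀ t : ℚ, (r1 : ℚ) = t * (q1 - p1) + p1 → (r2 : ℚ) = t * (q2 - p2) + p2 →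
      ∃ t : ℚ, emb (r0, r1, r2) = t • (emb (q0, q1, q2) - emb (p0, p1, p2)) + emb (p0, p1, p2) := by
    intro t h1 h2
    refine ⟨t, ?_⟩
    ext x
    fin_cases x
    · simp [emb]
      linear_combination dR - t * dQ + (t - 1) * dP - h1 - h2
    · simpa [emb] using h1
    · simpa [emb] using h2
  by_cases hu : (q1 : ℚ) - p1 = 0
  · have hu2 : (q2 : ℚ) - p2 ≠ 0 := by
      intro hu2
      apply hPQ
      have e1 : q1 = p1 := by exact_mod_cast sub_eq_zero.mp hu
      have e2 : q2 = p2 := by exact_mod_cast sub_eq_zero.mp hu2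
      have e0 : q0 = p0 := by omega
      simp [e0, e1, e2]
    have hv : (r1 : ℚ) - p1 = 0 := by
      rw [hu] at hdetQ
      have : ((q2 : ℚ) - p2) * (r1 - p1) = 0 := by linear_combination -hdetQ
      exact (mul_eq_zero.mp this).resolve_left hu2
    refine key ((r2 - p2) / (q2 - p2)) ?_ ?_
    · rw [hu]
      linear_combination hv
    · rw [div_mul_cancel₀ _ hu2]
      ring
  · refine key ((r1 - p1) / (q1 - p1)) ?_ ?_
    · rw [div_mul_cancel₀ _ hu]
      ring
    · field_simp
      linear_combination hdetQ

/-- Two positive coordinates keep a point away from the three vertices. -/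
lemma mem_Tprime {n i j k : ℕ} (h : i + j + k = n)
    (hpos : (0 < j ∧ 0 < k) ∨ (0 < i ∧ 0 < k) ∨ (0 < i ∧ 0 < j)) : (i, j, k) ∈ Tprime n := by
  refine ⟨h, ?_⟩
  simp only [Set.mem_insert_iff, Set.mem_singleton_iff, Prod.mk.injEq]
  omega

theorem stmt_8 (n : ℕ) (hn : 3 ≤ n) (a b c : ℂ) (ha : a ≠ 0)
    (d e f : ℕ → ℕ → ℕ → ℂ) :
    (∀ i j k : ℕ, i + j + k = n →
        (0 < i → 0 < k →
          e (i - 1) j (k - 1) * ((i : ℂ) * a + (j : ℂ) * b + (k : ℂ) * c) = 0) ∧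
        (0 < i → 0 < j →
          f (i - 1) (j - 1) k * ((i : ℂ) * a + (j : ℂ) * b + (k : ℂ) * c) = 0) ∧
        (i = 0 → 0 < j → 0 < k →
          d 0 (j - 1) (k - 1) * ((j : ℂ) * b + (k : ℂ) * c) = 0)) ↔
    (((∀ j k : ℕ, j + k = n - 2 → d 0 j k = 0) ∧
        (∀ i j k : ℕ, i + j + k = n - 2 → e i j k = 0 ∧ f i j k = 0)) ∨
      ∃ H : Set (ℕ × ℕ × ℕ), H ⊆ Tprime n ∧
        ((∃ p ∈ Tprime n, H = {p}) ∨
          (IsMaxSegment n H ∧ ∀ P ∈ H, ∀ Q ∈ H, P ≠ Q →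
            ¬ Collinear ℚ {emb P, emb Q, emb (n, 0, 0)})) ∧
        (∀ p ∈ H, (p.1 : ℂ) * a + (p.2.1 : ℂ) * b + (p.2.2 : ℂ) * c = 0) ∧
        (∀ j k : ℕ, j + k = n - 2 → ((0, j + 1, k + 1) : ℕ × ℕ × ℕ) ∉ H → d 0 j k = 0) ∧
        (∀ i j k : ℕ, i + j + k = n - 2 → ((i + 1, j, k + 1) : ℕ × ℕ × ℕ) ∉ H → e i j k = 0) ∧
        (∀ i j k : ℕ, i + j + k = n - 2 → ((i + 1, j + 1, k) : ℕ × ℕ × ℕ) ∉ H → f i j k = 0)) := by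
  constructor
  · intro hsys
    set H : Set (ℕ × ℕ × ℕ) := {p | p ∈ Tprime n ∧ linForm a b c p = 0} with hH
    have hd : ∀ j k : ℕ, j + k = n - 2 → ((0, j + 1, k + 1) : ℕ × ℕ × ℕ) ∉ H → d 0 j k = 0 := by
      intro j k hjk hnot
      have h := (hsys 0 (j + 1) (k + 1) (by omega)).2.2 rfl (by omega) (by omega)
      refine (mul_eq_zero.mp h).resolve_right fun h0 => hnot ⟨mem_Tprime (by omega) (by omega), ?_⟩
      simpa [linForm] using h0
    have he : ∀ i j k : ℕ, i + j + k = n - 2 →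
        ((i + 1, j, k + 1) : ℕ × ℕ × ℕ) ∉ H → e i j k = 0 := by
      intro i j k hijk hnot
      have h := (hsys (i + 1) j (k + 1) (by omega)).1 (by omega) (by omega)
      exact (mul_eq_zero.mp h).resolve_right
        fun h0 => hnot ⟨mem_Tprime (by omega) (by omega), h0⟩
    have hf : ∀ i j k : ℕ, i + j + k = n - 2 →
        ((i + 1, j + 1, k) : ℕ × ℕ × ℕ) ∉ H → f i j k = 0 := by
      intro i j k hijk hnot
      have h := (hsys (i + 1) (j + 1) k (by omega)).2.1 (by omega) (by omega)
      exact (mul_eq_zero.mp h).resolve_right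
        fun h0 => hnot ⟨mem_Tprime (by omega) (by omega), h0⟩
    rcases H.eq_empty_or_nonempty with hE | ⟨P, hP⟩
    · left
      have hno : ∀ p, p ∉ H := fun p => by simp [hE]
      exact ⟨fun j k h => hd j k h (hno _),
        fun i j k h => ⟨he i j k h (hno _), hf i j k h (hno _)⟩⟩
    · right
      refine ⟨H, fun p hp => hp.1, ?_, fun p hp => hp.2, hd, he, hf⟩
      by_cases hs : ∀ Q ∈ H, Q = P
      · exact Or.inl ⟨P, hP.1, Set.eq_singleton_iff_unique_mem.mpr ⟨hP, hs⟩⟩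
      · right
        push Not at hs
        obtain ⟨Q, hQ, hQP⟩ := hs
        refine ⟨⟨fun p hp => hp.1, ⟨P, hP, Q, hQ, hQP.symm⟩, ?_, ?_⟩, ?_⟩
        · rw [collinear_iff_of_mem (Set.mem_image_of_mem emb hP)]
          refine ⟨emb Q - emb P, ?_⟩
          rintro _ ⟨R, hR, rfl⟩
          exact exists_param_of_zeros (by omega) ha hQP.symm hP.1.1 hQ.1.1 hR.1.1 hP.2 hQ.2 hR.2
        · rintro R hR ⟨A, hA, B, hB, hAB, hcol⟩
          exact ⟨hR, form_eq_zero_of_collinear hAB hcol hA.2 hB.2⟩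
        · intro A hA B hB hAB hcol
          have h := form_eq_zero_of_collinear hAB hcol hA.2 hB.2
          simp [linForm, ha] at h
          omega
  · rintro (⟨hd, hef⟩ | ⟨H, -, -, hL, hd, he, hf⟩) i j k hijk
    · refine ⟨fun hi hk => ?_, fun hi hj => ?_, fun hi hj hk => ?_⟩
      · rw [(hef (i - 1) j (k - 1) (by omega)).1, zero_mul]
      · rw [(hef (i - 1) (j - 1) k (by omega)).2, zero_mul]
      · rw [hd (j - 1) (k - 1) (by omega), zero_mul]
    · by_cases hmem : (i, j, k) ∈ H
      · have h := hL _ hmem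
        refine ⟨fun _ _ => by rw [h, mul_zero], fun _ _ => by rw [h, mul_zero], ?_⟩
        rintro rfl _ _
        have h' : (j : ℂ) * b + (k : ℂ) * c = 0 := by simpa using h
        rw [h', mul_zero]
      · refine ⟨fun hi hk => ?_, fun hi hj => ?_, fun hi hj hk => ?_⟩
        · rw [he (i - 1) j (k - 1) (by omega), zero_mul]
          rwa [Nat.sub_add_cancel hi, Nat.sub_add_cancel hk]
        · rw [hf (i - 1) (j - 1) k (by omega), zero_mul]
          rwa [Nat.sub_add_cancel hi, Nat.sub_add_cancel hj]
        · rw [hd (j - 1) (k - 1) (by omega), zero_mul]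
          rw [Nat.sub_add_cancel hj, Nat.sub_add_cancel hk, ← hi]
          exact hmem
end

section
/- Let n ≥ 4 and let ℓ ∈ {1,2,3}. The number of maximal segments H of T' belonging to ℋ₂ such that H ∩ Γ_ℓ ≠ ∅ and H ∩ Δ_ℓ ≠ ∅ (equivalently, H = H(P,Q) for some P ∈ Γ_ℓ and Q ∈ Δ_ℓ) is exactly 6n − 11. -/
/-!
Inside the plane `i + j + k = n`, three points are collinear exactly when the `2 × 2` determinant
`crs` of their last two coordinates vanishes, so the maximal segments are the sets `seg n P Q` of
zeros of `crs P Q`, and any two points of such a set determine it (`maxSeg_iff`, `maxSeg_eq`).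

For `ℓ = 1`, put `A = (n-1,1,0)`, `B = (n-1,0,1)`, `C = (n-2,1,1)`. The set `Δ₁` has `2n - 1` points,
`n - 1` with `i = 0` and `n` with `i = 1`. Seen from one of `A`, `B`, `C`, two points of `Δ₁` with
the same `i` lie on different lines, and two with different `i` lie on a common line only in
degenerate cases, since consecutive integers are coprime (`coprime_step`). For `A` the only
coincidence is the line `j = 1`, and the edge `k = 0` has to be discarded: `2n - 3` segments remain.
The same holds for `B`; for `C` there are two coincidences, `j = 1` and `k = 1`, and no edge, hence
again `2n - 3` segments. The lines `AC` and `BC` are counted twice and `AB` misses `Δ₁`, so the total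
is `3 (2n - 3) - 2 = 6n - 11`. The set `idx n` picks one pair `(P, Q)` for each of these segments.

The cyclic rotation of the coordinates carries the case `ℓ + 1` injectively into the case `ℓ`, so the
three counts agree.
-/

open scoped BigOperators

/-- The `ℓ`-th coordinate of a point of `ℕ³`. -/
def coord (ℓ : Fin 3) (p : ℕ × ℕ × ℕ) : ℕ := ![p.1, p.2.1, p.2.2] ℓ

/-- The three-element sets `Γ₁, Γ₂, Γ₃`. -/
def Gam (n : ℕ) (ℓ : Fin 3) : Set (ℕ × ℕ × ℕ) :=
  ![({(n - 1, 1, 0), (n - 1, 0, 1), (n - 2, 1, 1)} : Set (ℕ × ℕ × ℕ)),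
    ({(0, n - 1, 1), (1, n - 1, 0), (1, n - 2, 1)} : Set (ℕ × ℕ × ℕ)),
    ({(0, 1, n - 1), (1, 0, n - 1), (1, 1, n - 2)} : Set (ℕ × ℕ × ℕ))] ℓ

/-- The sets `Δ₁, Δ₂, Δ₃`: points of `T'` whose `ℓ`-th coordinate is at most 1. -/
def Delta (n : ℕ) (ℓ : Fin 3) : Set (ℕ × ℕ × ℕ) :=
  {p ∈ Tprime n | coord ℓ p ≤ 1}

/-- The three edge segments `H₁, H₂, H₃` of `T'`. -/
def Edge (n : ℕ) (ℓ : Fin 3) : Set (ℕ × ℕ × ℕ) :=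
  {p ∈ Tprime n | coord ℓ p = 0 ∧ ∀ m : Fin 3, m ≠ ℓ → 0 < coord m p}

/-- `ℋ₂`: the maximal segments of `T'` other than the three edge segments. -/
def Htwo (n : ℕ) : Set (Set (ℕ × ℕ × ℕ)) :=
  {H | IsMaxSegment n H ∧ ∀ ℓ : Fin 3, H ≠ Edge n ℓ}

/-- `ℋ_red`: the elements of `ℋ₂` meeting some `Γ_ℓ` and the corresponding `Δ_ℓ`. -/
def Hred (n : ℕ) : Set (Set (ℕ × ℕ × ℕ)) :=
  {H ∈ Htwo n | ∃ ℓ : Fin 3, (H ∩ Gam n ℓ).Nonempty ∧ (H ∩ Delta n ℓ).Nonempty}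

/-- Twice the signed area of the triangle `P Q R`, in the last two coordinates. -/
def crs (P Q R : ℕ × ℕ × ℕ) : ℤ :=
  ((Q.2.1 : ℤ) - P.2.1) * ((R.2.2 : ℤ) - P.2.2) - ((Q.2.2 : ℤ) - P.2.2) * ((R.2.1 : ℤ) - P.2.1)

/-- The points of `T'` on the line through `P` and `Q`, when `P` and `Q` are distinct. -/
def seg (n : ℕ) (P Q : ℕ × ℕ × ℕ) : Set (ℕ × ℕ × ℕ) := {R ∈ Tprime n | crs P Q R = 0}

/-- The segments to be counted, for a given `ℓ`. -/
def segsAt (n : ℕ) (ℓ : Fin 3) : Set (Set (ℕ × ℕ × ℕ)) :=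
  {H | H ∈ Htwo n ∧ (H ∩ Gam n ℓ).Nonempty ∧ (H ∩ Delta n ℓ).Nonempty}

/-- One pair `(P, Q)` with `P ∈ Γ₁` and `Q ∈ Δ₁` for each segment counted when `ℓ = 1`. The lines
`j = 1` and `k = 1` are represented by `P = (n-2,1,1)` and a point `Q` with first coordinate `0`. -/
def idx (n : ℕ) : Set ((ℕ × ℕ × ℕ) × (ℕ × ℕ × ℕ)) :=
  {x | x.2 ∈ Tprime n ∧ x.2.1 ≤ 1 ∧
    ((x.1 = (n - 1, 1, 0) ∧ x.2.2.1 ≠ 1 ∧ x.2.2.2 ≠ 0) ∨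
     (x.1 = (n - 1, 0, 1) ∧ x.2.2.2 ≠ 1 ∧ x.2.2.1 ≠ 0) ∨
     (x.1 = (n - 2, 1, 1) ∧ ¬ (x.2.1 = 1 ∧ (x.2.2.1 = 1 ∨ x.2.2.2 = 1))))}

/-- The cyclic rotation of coordinates. -/
def rot (p : ℕ × ℕ × ℕ) : ℕ × ℕ × ℕ := (p.2.1, p.2.2, p.1)

/-! ### Collinearity and maximal segments -/

lemma mem_Tprime_s14 {n a b c : ℕ} : (a, b, c) ∈ Tprime n ↔ a + b + c = n ∧ a < n ∧ b < n ∧ c < n := by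
  simp only [Tprime, Set.mem_sdiff, Set.mem_ofPred_eq, Set.mem_insert_iff, Set.mem_singleton_iff,
    Prod.mk.injEq]
  omega

lemma sum_eq {n : ℕ} {P : ℕ × ℕ × ℕ} (h : P ∈ Tprime n) : P.1 + P.2.1 + P.2.2 = n := h.1

lemma crs_eq_zero_of_collinear {P Q R : ℕ × ℕ × ℕ} (h : Collinear ℚ {emb P, emb Q, emb R}) :
    crs P Q R = 0 := by
  rw [collinear_iff_of_mem (p₀ := emb P) (by simp)] at h
  obtain ⟨v, hv⟩ := h
  obtain ⟨s, hs⟩ := hv (emb Q) (by simp)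
  obtain ⟨t, ht⟩ := hv (emb R) (by simp)
  have s1 := congrFun hs 1
  have s2 := congrFun hs 2
  have t1 := congrFun ht 1
  have t2 := congrFun ht 2
  simp [emb] at s1 s2 t1 t2
  have : ((crs P Q R : ℤ) : ℚ) = 0 := by
    simp only [crs]
    push_cast
    rw [s1, s2, t1, t2]
    ring
  exact_mod_cast this

/-- Converse of `crs_eq_zero_of_collinear`: the first coordinate follows from the other two because
all points lie in the plane `i + j + k = n`. -/
lemma exists_emb_eq {n : ℕ} {P Q R : ℕ × ℕ × ℕ} (hP : P ∈ Tprime n) (hQ : Q ∈ Tprime n)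
    (hR : R ∈ Tprime n) (hne : P ≠ Q) (h : crs P Q R = 0) :
    ∃ t : ℚ, emb R = t • (emb Q - emb P) +ᵥ emb P := by
  have p := sum_eq hP
  have q := sum_eq hQ
  have r := sum_eq hR
  obtain ⟨p1, p2, p3⟩ := P
  obtain ⟨q1, q2, q3⟩ := Q
  obtain ⟨r1, r2, r3⟩ := R
  simp only [crs] at h p q r
  have h' : ((q2 : ℚ) - p2) * ((r3 : ℚ) - p3) - ((q3 : ℚ) - p3) * ((r2 : ℚ) - p2) = 0 := by
    exact_mod_cast h
  have p' : (p1 : ℚ) = n - p2 - p3 := by rw [← p]; push_cast; ring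
  have q' : (q1 : ℚ) = n - q2 - q3 := by rw [← q]; push_cast; ring
  have r' : (r1 : ℚ) = n - r2 - r3 := by rw [← r]; push_cast; ring
  by_cases h2 : q2 = p2
  · have h3 : (q3 : ℚ) - p3 ≠ 0 := by
      intro h3
      have h3 : q3 = p3 := by
        have : (q3 : ℚ) = p3 := by linarith
        exact_mod_cast this
      apply hne
      simp only [Prod.mk.injEq]
      omega
    refine ⟨(r3 - p3) / (q3 - p3), ?_⟩
    subst h2
    have hr2 : (r2 : ℚ) = q2 := by
      have : ((q3 : ℚ) - p3) * ((r2 : ℚ) - q2) = 0 := by linear_combination -h'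
      rcases mul_eq_zero.1 this with h | h
      · exact absurd h h3
      · linarith
    funext m
    fin_cases m <;> simp [emb, p', q', r', hr2] <;> field_simp <;> ring
  · have h2 : (q2 : ℚ) - p2 ≠ 0 := by
      intro h3
      apply h2
      have : (q2 : ℚ) = p2 := by linarith
      exact_mod_cast this
    refine ⟨(r2 - p2) / (q2 - p2), ?_⟩
    funext m
    fin_cases m <;> simp [emb, p', q', r'] <;> field_simp <;>
      first | linear_combination h' | linear_combination -h' | ring1

/-- If `P'` and `Q'` are distinct points of the line `P Q`, every point of the line `P' Q'` lies on
the line `P Q`. -/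
lemma crs_trans {n : ℕ} {P Q P' Q' R : ℕ × ℕ × ℕ} (hP' : P' ∈ Tprime n) (hQ' : Q' ∈ Tprime n)
    (hne' : P' ≠ Q') (h1 : crs P Q P' = 0) (h2 : crs P Q Q' = 0) (h3 : crs P' Q' R = 0) :
    crs P Q R = 0 := by
  have p := sum_eq hP'
  have q := sum_eq hQ'
  by_contra h
  have e1 : ((Q'.2.1 : ℤ) - P'.2.1) * crs P Q R = 0 := by
    simp only [crs] at *
    linear_combination ((Q.2.1 : ℤ) - P.2.1) * h3 + ((Q'.2.1 : ℤ) - P'.2.1) * h1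
      + ((R.2.1 : ℤ) - P'.2.1) * (h2 - h1)
  have e2 : ((Q'.2.2 : ℤ) - P'.2.2) * crs P Q R = 0 := by
    simp only [crs] at *
    linear_combination ((Q.2.2 : ℤ) - P.2.2) * h3 + ((Q'.2.2 : ℤ) - P'.2.2) * h1
      + ((R.2.2 : ℤ) - P'.2.2) * (h2 - h1)
  have e1 := (mul_eq_zero.1 e1).resolve_right h
  have e2 := (mul_eq_zero.1 e2).resolve_right h
  apply hne'
  ext <;> omega

lemma left_mem_seg {n : ℕ} {P Q : ℕ × ℕ × ℕ} (hP : P ∈ Tprime n) : P ∈ seg n P Q :=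
  ⟨hP, by simp [crs]⟩

lemma right_mem_seg {n : ℕ} {P Q : ℕ × ℕ × ℕ} (hQ : Q ∈ Tprime n) : Q ∈ seg n P Q :=
  ⟨hQ, by simp only [crs]; ring⟩

lemma seg_maxSeg {n : ℕ} {P Q : ℕ × ℕ × ℕ} (hP : P ∈ Tprime n) (hQ : Q ∈ Tprime n) (hne : P ≠ Q) :
    IsMaxSegment n (seg n P Q) := by
  refine ⟨fun R h => h.1, ⟨P, left_mem_seg hP, Q, right_mem_seg hQ, hne⟩, ?_, ?_⟩
  · have hP' : emb P ∈ emb '' seg n P Q := ⟨P, left_mem_seg hP, rfl⟩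
    rw [collinear_iff_of_mem hP']
    refine ⟨emb Q - emb P, ?_⟩
    rintro _ ⟨R, hR, rfl⟩
    exact exists_emb_eq hP hQ hR.1 hne hR.2
  · rintro R hR ⟨P', hP', Q', hQ', hne', h⟩
    exact ⟨hR, crs_trans hP'.1 hQ'.1 hne' hP'.2 hQ'.2 (crs_eq_zero_of_collinear h)⟩

lemma maxSeg_eq {n : ℕ} {H : Set (ℕ × ℕ × ℕ)} (hH : IsMaxSegment n H) {P Q : ℕ × ℕ × ℕ}
    (hP : P ∈ H) (hQ : Q ∈ H) (hne : P ≠ Q) : H = seg n P Q := by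
  obtain ⟨hs, -, hc, hm⟩ := hH
  apply Set.Subset.antisymm
  · intro R hR
    refine ⟨hs hR, crs_eq_zero_of_collinear (hc.subset ?_)⟩
    rintro x (rfl | rfl | rfl)
    exacts [⟨P, hP, rfl⟩, ⟨Q, hQ, rfl⟩, ⟨R, hR, rfl⟩]
  · intro R hR
    refine hm R hR.1 ⟨P, hP, Q, hQ, hne, ?_⟩
    refine (seg_maxSeg (hs hP) (hs hQ) hne).2.2.1.subset ?_
    rintro x (rfl | rfl | rfl)
    exacts [⟨P, left_mem_seg (hs hP), rfl⟩, ⟨Q, right_mem_seg (hs hQ), rfl⟩, ⟨R, hR, rfl⟩]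

lemma maxSeg_iff {n : ℕ} {H : Set (ℕ × ℕ × ℕ)} :
    IsMaxSegment n H ↔ ∃ P ∈ Tprime n, ∃ Q ∈ Tprime n, P ≠ Q ∧ H = seg n P Q := by
  constructor
  · intro h
    obtain ⟨P, hP, Q, hQ, hne⟩ := h.2.1
    exact ⟨P, h.1 hP, Q, h.1 hQ, hne, maxSeg_eq h hP hQ hne⟩
  · rintro ⟨P, hP, Q, hQ, hne, rfl⟩
    exact seg_maxSeg hP hQ hne

/-! ### Rotation of the coordinates -/

lemma rot_injective : Function.Injective rot := by
  rintro ⟨a, b, c⟩ ⟨d, e, f⟩ h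
  simp [rot] at h ⊢
  tauto

lemma rot_mem_Tprime {n : ℕ} {p : ℕ × ℕ × ℕ} : rot p ∈ Tprime n ↔ p ∈ Tprime n := by
  obtain ⟨a, b, c⟩ := p
  simp only [rot, mem_Tprime_s14]
  omega

lemma exists_rot (p : ℕ × ℕ × ℕ) : ∃ q, rot q = p := ⟨(p.2.2, p.1, p.2.1), rfl⟩

lemma coord_rot (m : Fin 3) (p : ℕ × ℕ × ℕ) : coord m (rot p) = coord (m + 1) p := by
  fin_cases m <;> rfl

lemma crs_rot {n : ℕ} {P Q R : ℕ × ℕ × ℕ} (hP : P ∈ Tprime n) (hQ : Q ∈ Tprime n)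
    (hR : R ∈ Tprime n) : crs (rot P) (rot Q) (rot R) = crs P Q R := by
  have p : (P.1 : ℤ) = n - P.2.1 - P.2.2 := by have := sum_eq hP; omega
  have q : (Q.1 : ℤ) = n - Q.2.1 - Q.2.2 := by have := sum_eq hQ; omega
  have r : (R.1 : ℤ) = n - R.2.1 - R.2.2 := by have := sum_eq hR; omega
  simp only [crs, rot, p, q, r]
  ring

lemma rot_image_maxSeg {n : ℕ} {H : Set (ℕ × ℕ × ℕ)} (h : IsMaxSegment n H) :
    IsMaxSegment n (rot '' H) := by
  obtain ⟨P, hP, Q, hQ, hne, rfl⟩ := maxSeg_iff.1 h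
  refine maxSeg_iff.2 ⟨rot P, rot_mem_Tprime.2 hP, rot Q, rot_mem_Tprime.2 hQ,
    rot_injective.ne hne, ?_⟩
  ext x
  obtain ⟨R, rfl⟩ := exists_rot x
  rw [rot_injective.mem_set_image]
  constructor
  · rintro ⟨h1, h2⟩
    exact ⟨rot_mem_Tprime.2 h1, by rwa [crs_rot hP hQ h1]⟩
  · rintro ⟨h1, h2⟩
    have h1 := rot_mem_Tprime.1 h1
    exact ⟨h1, by rwa [crs_rot hP hQ h1] at h2⟩

lemma rot_image_Edge (n : ℕ) (m : Fin 3) : rot '' Edge n (m + 1) = Edge n m := by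
  ext x
  obtain ⟨R, rfl⟩ := exists_rot x
  rw [rot_injective.mem_set_image]
  simp only [Edge, Set.mem_ofPred_eq, rot_mem_Tprime, coord_rot]
  refine and_congr_right fun _ => and_congr_right fun _ => ⟨fun h k hk => ?_, fun h k hk => ?_⟩
  · exact h (k + 1) (fun e => hk (add_right_cancel e))
  · have := h (k - 1) (fun e => hk (sub_eq_iff_eq_add.1 e))
    rwa [sub_add_cancel] at this

lemma rot_mem_Gam {n : ℕ} {ℓ : Fin 3} {p : ℕ × ℕ × ℕ} (h : p ∈ Gam n (ℓ + 1)) :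
    rot p ∈ Gam n ℓ := by
  fin_cases ℓ <;> simp [Gam] at h ⊢ <;> rcases h with rfl | rfl | rfl <;> simp [rot]

lemma segsAt_finite (n : ℕ) (ℓ : Fin 3) : (segsAt n ℓ).Finite := by
  have hT : (Tprime n).Finite := by
    refine (Set.finite_Iic ((n, n, n) : ℕ × ℕ × ℕ)).subset ?_
    rintro ⟨a, b, c⟩ h
    rw [mem_Tprime_s14] at h
    simp only [Set.mem_Iic, Prod.mk_le_mk]
    omega
  exact hT.finite_subsets.subset fun H h => h.1.1.1

/-- Rotation maps the segments counted for `ℓ + 1` injectively to those counted for `ℓ`. Applied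
three times around the cycle, this gives equality of the three counts. -/
lemma ncard_segsAt_le (n : ℕ) (ℓ : Fin 3) : (segsAt n (ℓ + 1)).ncard ≤ (segsAt n ℓ).ncard := by
  refine Set.ncard_le_ncard_of_injOn (fun H => rot '' H) ?_
    (fun _ _ _ _ h => rot_injective.image_injective h) (segsAt_finite n ℓ)
  rintro H ⟨⟨hH, hE⟩, ⟨P, hP, hPG⟩, ⟨Q, hQ, hQT, hQc⟩⟩
  refine ⟨⟨rot_image_maxSeg hH, fun m hm => hE (m + 1) ?_⟩, ⟨rot P, ⟨P, hP, rfl⟩, rot_mem_Gam hPG⟩,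
    ⟨rot Q, ⟨Q, hQ, rfl⟩, rot_mem_Tprime.2 hQT, by rwa [coord_rot]⟩⟩
  rw [← rot_image_Edge] at hm
  exact rot_injective.image_injective hm

/-! ### The case `ℓ = 1` -/

/-- The vectors `(a, s - a)` and `(b, s - 1 - b)` are parallel only when both lie on the same
coordinate axis: `s` is coprime to `s - 1`, so it divides `a`. -/
lemma coprime_step {s a b : ℤ} (hs : 1 ≤ s) (h0 : 0 ≤ a) (h1 : a ≤ s) (h : a * (s - 1) = b * s) :
    (a = 0 ∧ b = 0) ∨ (a = s ∧ b = s - 1) := by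
  have e : a = s * (a - b) := by linear_combination -h
  have l0 : 0 ≤ a - b := by nlinarith
  have l1 : a - b ≤ 1 := by nlinarith
  have : a - b = 0 ∨ a - b = 1 := by omega
  rcases this with h | h <;> rw [h] at e
  · left; omega
  · right; omega

/-- Distinct points `Q`, `Q'` paired with the same `P` in `idx n` lie on different lines through
`P`. -/
lemma idx_inj_right {n : ℕ} (hn : 4 ≤ n) {P Q Q' : ℕ × ℕ × ℕ} (h : (P, Q) ∈ idx n)
    (h' : (P, Q') ∈ idx n) (hc : crs P Q Q' = 0) : Q = Q' := by
  wlog hle : Q.1 ≤ Q'.1 generalizing Q Q'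
  · exact (this h' h (by simp only [crs] at *; linear_combination -hc) (by omega)).symm
  obtain ⟨p, u, v⟩ := P
  obtain ⟨i, j, k⟩ := Q
  obtain ⟨i', j', k'⟩ := Q'
  simp only [idx, Set.mem_ofPred_eq, mem_Tprime_s14, Prod.mk.injEq] at h h'
  simp only [crs] at hc
  simp only at hle
  -- With `s` the sum of the last two coordinates of `Q - P`, `crs P Q Q'` is `s * (j - j')` up to
  -- sign when `i = i'`; otherwise `i = 0`, `i' = 1` and the vanishing is that of `coprime_step`.
  have key : ∀ s : ℤ, s = (j : ℤ) - u + (k - v) → 1 ≤ s →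
      ((i = i' ∧ j = j') ∨ (i = 0 ∧ i' = 1 ∧ ((j : ℤ) - u) * (s - 1) = ((j' : ℤ) - u) * s)) := by
    intro s hs h1
    by_cases hi : i = i'
    · left
      refine ⟨hi, ?_⟩
      have hk' : (k' : ℤ) = j + k - j' := by omega
      rw [hk'] at hc
      have : s * ((j : ℤ) - j') = 0 := by rw [hs]; linear_combination hc
      rcases mul_eq_zero.1 this with h | h <;> omega
    · right
      refine ⟨by omega, by omega, ?_⟩
      have hk' : (k' : ℤ) = j + k - j' - 1 := by omega
      rw [hk'] at hc
      rw [hs]; linear_combination hc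
  have hs : (1 : ℤ) ≤ (j : ℤ) - u + (k - v) := by omega
  rcases key _ rfl hs with ⟨h1, h2⟩ | ⟨h1, h2, h3⟩
  · simp only [Prod.mk.injEq]; omega
  · exfalso
    rcases coprime_step hs (by omega) (by omega) h3 with h | h <;> omega

lemma idx_left_mem {n : ℕ} (hn : 4 ≤ n) {P Q : ℕ × ℕ × ℕ} (h : (P, Q) ∈ idx n) : P ∈ Tprime n := by
  obtain ⟨p, u, v⟩ := P
  simp only [idx, Set.mem_ofPred_eq, Prod.mk.injEq] at h
  rw [mem_Tprime_s14]
  omega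

lemma idx_ne {n : ℕ} (hn : 4 ≤ n) {P Q : ℕ × ℕ × ℕ} (h : (P, Q) ∈ idx n) : P ≠ Q := by
  rintro rfl
  obtain ⟨p, u, v⟩ := P
  simp only [idx, Set.mem_ofPred_eq, Prod.mk.injEq] at h
  omega

/-- The first point of a pair in `idx n` is determined by the segment: a line through two points of
`Γ₁` that meets `Δ₁` is `j = 1` or `k = 1`. -/
lemma idx_inj_left {n : ℕ} (hn : 4 ≤ n) {P Q P' Q' : ℕ × ℕ × ℕ} (h : (P, Q) ∈ idx n)
    (h' : (P', Q') ∈ idx n) (hc : crs P Q P' = 0) (hc' : crs P' Q' P = 0) : P = P' := by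
  obtain ⟨p, u, v⟩ := P
  obtain ⟨i, j, k⟩ := Q
  obtain ⟨p', u', v'⟩ := P'
  obtain ⟨i', j', k'⟩ := Q'
  simp only [idx, Set.mem_ofPred_eq, mem_Tprime_s14, Prod.mk.injEq] at h h'
  simp only [crs] at hc hc'
  obtain ⟨h1, h2, h3⟩ := h
  obtain ⟨h1', h2', h3'⟩ := h'
  rcases h3 with ⟨⟨rfl, rfl, rfl⟩, h3⟩ | ⟨⟨rfl, rfl, rfl⟩, h3⟩ | ⟨⟨rfl, rfl, rfl⟩, h3⟩ <;>
  rcases h3' with ⟨⟨rfl, rfl, rfl⟩, h3'⟩ | ⟨⟨rfl, rfl, rfl⟩, h3'⟩ | ⟨⟨rfl, rfl, rfl⟩, h3'⟩ <;>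
  first
  | rfl
  | (exfalso; push_cast at hc hc'; ring_nf at hc hc'; omega)

lemma seg_injOn_idx {n : ℕ} (hn : 4 ≤ n) : Set.InjOn (fun x => seg n x.1 x.2) (idx n) := by
  rintro ⟨P, Q⟩ h ⟨P', Q'⟩ h' he
  simp only at he
  have e1 : P' ∈ seg n P Q := he ▸ left_mem_seg (idx_left_mem hn h')
  have e2 : P ∈ seg n P' Q' := he ▸ left_mem_seg (idx_left_mem hn h)
  obtain rfl := idx_inj_left hn h h' e1.2 e2.2
  have e3 : Q' ∈ seg n P Q := he ▸ right_mem_seg h'.1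
  rw [idx_inj_right hn h h' e3.2]

/-- A segment with two points on the edge `m` is that whole edge. -/
lemma seg_eq_Edge {n : ℕ} {P Q : ℕ × ℕ × ℕ} (hP : P ∈ Tprime n) (hQ : Q ∈ Tprime n) (hne : P ≠ Q)
    {m : Fin 3} (h1 : coord m P = 0) (h2 : coord m Q = 0) : seg n P Q = Edge n m := by
  obtain ⟨a, b, c⟩ := P
  obtain ⟨d, e, f⟩ := Q
  rw [mem_Tprime_s14] at hP hQ
  ext ⟨i, j, k⟩
  simp only [seg, Edge, Set.mem_ofPred_eq, mem_Tprime_s14]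
  refine and_congr_right fun hR => ?_
  have hn' : coord m (i, j, k) = 0 → ∀ m' : Fin 3, m' ≠ m → 0 < coord m' (i, j, k) := by
    intro h m' hm
    fin_cases m <;> fin_cases m' <;> simp [coord] at h hm ⊢ <;> omega
  rw [and_iff_left_of_imp hn']
  have hbe : (e : ℤ) - b ≠ 0 ∨ (f : ℤ) - c ≠ 0 := by
    by_contra! h
    apply hne
    simp only [Prod.mk.injEq]
    omega
  simp only [crs]
  -- On the edge `m`, the determinant factors as a nonzero difference times the `m`-th coordinate.
  fin_cases m <;> simp [coord] at h1 h2 ⊢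
  · have hf : (f : ℤ) - c = -((e : ℤ) - b) := by omega
    have hk : (k : ℤ) - c = b - i - j := by omega
    have : (((e : ℤ) - b) * ((k : ℤ) - c) - ((f : ℤ) - c) * ((j : ℤ) - b)) =
        -((e : ℤ) - b) * i := by rw [hf, hk]; ring
    rw [this, mul_eq_zero]
    omega
  · subst h1 h2
    simp
    omega
  · subst h1 h2
    simp
    omega

lemma segsAt_zero {n : ℕ} (hn : 4 ≤ n) :
    segsAt n 0 = (fun x => seg n x.1 x.2) '' idx n := by
  apply Set.Subset.antisymm
  · rintro H ⟨⟨hH, hE⟩, ⟨P, hP, hPG⟩, ⟨Q, hQ, hQT, hQc⟩⟩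
    have hPT := hH.1 hP
    have hg : P = (n - 1, 1, 0) ∨ P = (n - 1, 0, 1) ∨ P = (n - 2, 1, 1) := by
      simpa [Gam] using hPG
    have hQ1 : Q.1 ≤ 1 := hQc
    have hne : P ≠ Q := by
      rintro rfl
      rcases hg with h | h | h <;> rw [h] at hQ1 <;> simp only at hQ1 <;> omega
    have hHe := maxSeg_eq hH hP hQ hne
    have hedge : ∀ m : Fin 3, ¬ (coord m P = 0 ∧ coord m Q = 0) := by
      rintro m ⟨h1, h2⟩
      exact hE m (hHe ▸ seg_eq_Edge hPT hQT hne h1 h2)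
    by_cases hi : (P, Q) ∈ idx n
    · exact ⟨_, hi, hHe.symm⟩
    -- Otherwise the line is `j = 1` or `k = 1`, represented in `idx n` by another pair.
    have hC : ((n - 2, 1, 1) : ℕ × ℕ × ℕ) ∈ Tprime n := by rw [mem_Tprime_s14]; omega
    have hjk : (P.2.1 = 1 ∧ Q.2.1 = 1) ∨ (P.2.2 = 1 ∧ Q.2.2 = 1) := by
      have e1 := hedge 1
      have e2 := hedge 2
      simp only [coord] at e1 e2
      simp only [idx, Set.mem_ofPred_eq, hQT, hQ1, true_and] at hi
      rcases hg with rfl | rfl | rfl <;> simp at e1 e2 hi ⊢ <;> omega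
    rcases hjk with ⟨h1, h2⟩ | ⟨h1, h2⟩
    · have hD : ((0, 1, n - 1) : ℕ × ℕ × ℕ) ∈ Tprime n := by rw [mem_Tprime_s14]; omega
      refine ⟨((n - 2, 1, 1), (0, 1, n - 1)), ?_, (maxSeg_eq hH ?_ ?_ ?_).symm⟩
      · simp [idx, hD]
      · rw [hHe]; exact ⟨hC, by simp [crs, h1, h2]⟩
      · rw [hHe]; exact ⟨hD, by simp [crs, h1, h2]⟩
      · simp; omega
    · have hD : ((0, n - 1, 1) : ℕ × ℕ × ℕ) ∈ Tprime n := by rw [mem_Tprime_s14]; omega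
      refine ⟨((n - 2, 1, 1), (0, n - 1, 1)), ?_, (maxSeg_eq hH ?_ ?_ ?_).symm⟩
      · simp [idx, hD]
      · rw [hHe]; exact ⟨hC, by simp [crs, h1, h2]⟩
      · rw [hHe]; exact ⟨hD, by simp [crs, h1, h2]⟩
      · simp; omega
  · rintro _ ⟨⟨P, Q⟩, h, rfl⟩
    have hP := idx_left_mem hn h
    have hQ : Q ∈ Tprime n := h.1
    refine ⟨⟨seg_maxSeg hP hQ (idx_ne hn h), fun m hm => ?_⟩, ⟨P, left_mem_seg hP, ?_⟩,
      ⟨Q, right_mem_seg hQ, hQ, ?_⟩⟩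
    · have h1 : coord m P = 0 := by
        have : P ∈ Edge n m := hm ▸ left_mem_seg hP
        exact this.2.1
      have h2 : coord m Q = 0 := by
        have : Q ∈ Edge n m := hm ▸ right_mem_seg hQ
        exact this.2.1
      obtain ⟨-, -, h3⟩ := h
      rcases h3 with ⟨rfl, h3⟩ | ⟨rfl, h3⟩ | ⟨rfl, h3⟩ <;>
        fin_cases m <;> simp [coord] at h1 h2 h3 <;> omega
    · have h3 := h.2.2
      simp only at h3
      simp only [Gam, Matrix.cons_val_zero, Set.mem_insert_iff, Set.mem_singleton_iff]
      tauto
    · exact h.2.1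

/-- The `c`-th of the six families of pairs making up `idx n`: the first point is one of the three
points of `Γ₁`, and the second has first coordinate `0` or `1` and second coordinate `j`. -/
def pairOf (n : ℕ) (x : Σ _ : Fin 6, ℕ) : (ℕ × ℕ × ℕ) × (ℕ × ℕ × ℕ) :=
  (![(n - 1, 1, 0), (n - 1, 1, 0), (n - 1, 0, 1), (n - 1, 0, 1), (n - 2, 1, 1), (n - 2, 1, 1)] x.1,
   ![(0, x.2, n - x.2), (1, x.2, n - 1 - x.2), (0, x.2, n - x.2), (1, x.2, n - 1 - x.2),
     (0, x.2, n - x.2), (1, x.2, n - 1 - x.2)] x.1)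

/-- The values of the second coordinate allowed in each family. -/
def rangeOf (n : ℕ) : Fin 6 → Finset ℕ :=
  ![Finset.Icc 2 (n - 1), (Finset.Icc 0 (n - 2)).erase 1, Finset.Icc 1 (n - 2),
    (Finset.Icc 1 (n - 1)).erase (n - 2), Finset.Icc 1 (n - 1),
    ((Finset.Icc 0 (n - 1)).erase 1).erase (n - 2)]

lemma idx_eq {n : ℕ} (hn : 4 ≤ n) :
    idx n = pairOf n '' ((Finset.univ : Finset (Fin 6)).sigma (rangeOf n) : Set (Σ _ : Fin 6, ℕ)) := by
  apply Set.Subset.antisymm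
  · rintro ⟨P, ⟨i, j, k⟩⟩ h
    simp only [idx, Set.mem_ofPred_eq, mem_Tprime_s14] at h
    obtain ⟨h1, h2, h3⟩ := h
    have hi : i = 0 ∨ i = 1 := by omega
    rcases hi with rfl | rfl <;>
    rcases h3 with ⟨rfl, h3⟩ | ⟨rfl, h3⟩ | ⟨rfl, h3⟩
    · refine ⟨⟨0, j⟩, ?_, ?_⟩ <;> simp [pairOf, rangeOf] <;> omega
    · refine ⟨⟨2, j⟩, ?_, ?_⟩ <;> simp [pairOf, rangeOf] <;> omega
    · refine ⟨⟨4, j⟩, ?_, ?_⟩ <;> simp [pairOf, rangeOf] <;> omega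
    · refine ⟨⟨1, j⟩, ?_, ?_⟩ <;> simp [pairOf, rangeOf] <;> omega
    · refine ⟨⟨3, j⟩, ?_, ?_⟩ <;> simp [pairOf, rangeOf] <;> omega
    · refine ⟨⟨5, j⟩, ?_, ?_⟩ <;> simp [pairOf, rangeOf] <;> omega
  · rintro _ ⟨⟨c, j⟩, h, rfl⟩
    fin_cases c <;> simp [rangeOf] at h <;>
      simp [idx, pairOf, mem_Tprime_s14] <;> omega

lemma pairOf_injective (n : ℕ) : Function.Injective (pairOf n) := by
  rintro ⟨c, j⟩ ⟨d, k⟩ h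
  fin_cases c <;> fin_cases d <;> simp [pairOf] at h ⊢ <;> omega

lemma ncard_idx {n : ℕ} (hn : 4 ≤ n) : (idx n).ncard = 6 * n - 11 := by
  rw [idx_eq hn, Set.ncard_image_of_injective _ (pairOf_injective n), Set.ncard_coe_finset,
    Finset.card_sigma, Fin.sum_univ_six]
  have h1 : ((Finset.Icc 0 (n - 2)).erase 1).card = n - 2 := by
    rw [Finset.card_erase_of_mem (by simp; omega)]; simp
  have h3 : ((Finset.Icc 1 (n - 1)).erase (n - 2)).card = n - 2 := by
    rw [Finset.card_erase_of_mem (by simp; omega)]; simp; omega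
  have h5 : (((Finset.Icc 0 (n - 1)).erase 1).erase (n - 2)).card = n - 2 := by
    rw [Finset.card_erase_of_mem (by simp; omega), Finset.card_erase_of_mem (by simp; omega)]
    simp; omega
  simp only [rangeOf, Matrix.cons_val, h1, h3, h5, Nat.card_Icc]
  omega

theorem stmt_14 (n : ℕ) (hn : 4 ≤ n) (ℓ : Fin 3) :
    {H : Set (ℕ × ℕ × ℕ) | H ∈ Htwo n ∧
      (H ∩ Gam n ℓ).Nonempty ∧ (H ∩ Delta n ℓ).Nonempty}.ncard = 6 * n - 11 := by
  change (segsAt n ℓ).ncard = _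
  have h0 : (segsAt n 0).ncard = 6 * n - 11 := by
    rw [segsAt_zero hn, (seg_injOn_idx hn).ncard_image, ncard_idx hn]
  have a : (segsAt n 1).ncard ≤ (segsAt n 0).ncard := ncard_segsAt_le n 0
  have b : (segsAt n 2).ncard ≤ (segsAt n 1).ncard := ncard_segsAt_le n 1
  have c : (segsAt n 0).ncard ≤ (segsAt n 2).ncard := ncard_segsAt_le n 2
  fin_cases ℓ <;> simp only [Fin.zero_eta, Fin.mk_one, Fin.reduceFinMk] <;> omega
end
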